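/- Let S be a complete c-semiring, Σ an alphabet, and A : List Σ → S a formal power series. If (X, Y) and (X', Y') are factorizations of A, then the inclusion degrees satisfy X →ᵢ X' = Y' →ᵢ Y. -/

import Mathlib

/-!
Both inclusion degrees have the same lower bounds. By residuation, `c ≤ incl f g` means
`f u * c ≤ g u` for all `u`, and `cauchy X Y ≤ A` means `X u * Y v ≤ A (u ++ v)` for all `u, v`.
If `X * c ≤ X'` pointwise, then `X u * (Y' v * c) = (X u * c) * Y' v ≤ X' u * Y' v ≤ A (u ++ v)`,
and maximality of `(X, Y)` forces `Y' * c ≤ Y`. The converse is symmetric, through the maximality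
of `(X', Y')` in its first component.
-/

/-- A complete c-semiring: a complete lattice with a commutative monoid
multiplication distributing over arbitrary suprema, whose unit is the top element.
Addition is join, zero is `⊥`, infinitary sums are suprema. -/
class CompleteCSemiring (S : Type*) extends CompleteLattice S, CommMonoid S where
  mul_sSup : ∀ (a : S) (s : Set S), a * sSup s = ⨆ b ∈ s, a * b
  one_eq_top : (1 : S) = ⊤

namespace FPS

open Classical
noncomputable section

variable {S : Type*} [CompleteCSemiring S] {α : Type*}

/-- Cauchy product of formal power series. -/
def cauchy (A B : List α → S) : List α → S :=
  fun w => ⨆ (u : List α) (v : List α) (_ : u ++ v = w), A u * B v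

/-- Left quotient of `A` by the series `X`. -/
def lquot (X A : List α → S) : List α → S := fun v => ⨆ u : List α, X u * A (u ++ v)

/-- Right quotient of `A` by the series `Y`. -/
def rquot (A Y : List α → S) : List α → S := fun v => ⨆ u : List α, A (v ++ u) * Y u

/-- Left residual `X \ A`. -/
def lres (X A : List α → S) : List α → S := sSup {Z | cauchy X Z ≤ A}

/-- Right residual `A / Y`. -/
def rres (A Y : List α → S) : List α → S := sSup {Z | cauchy Z Y ≤ A}

/-- Residual in the semiring `S`: `a ⇨ b`. -/
def resid (a b : S) : S := sSup {x | a * x ≤ b}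

/-- Inclusion degree of the series `f` into `g`. -/
def incl (f g : List α → S) : S := ⨅ u : List α, resid (f u) (g u)

/-- A word viewed as a series: `1` at `u` and `⊥` elsewhere. -/
def wordSeries (u : List α) : List α → S := fun w => if w = u then 1 else ⊥

/-- Reversal of a series. -/
def rev (A : List α → S) : List α → S := fun w => A w.reverse

/-- Extended transition map of a weighted automaton. -/
def deltaStar {Q : Type*} (δ : Q → α → Q → S) : Q → List α → Q → S
  | q, [], p => ⨆ _ : q = p, 1
  | q, a :: w, p => ⨆ r : Q, δ q a r * deltaStar δ r w p

/-- Behaviour of a weighted automaton. -/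
def behavior {Q : Type*} (δ : Q → α → Q → S) (I F : Q → S) : List α → S :=
  fun w => ⨆ (p : Q) (q : Q), I p * deltaStar δ p w q * F q

/-- Past of a state of a weighted automaton. -/
def past {Q : Type*} (δ : Q → α → Q → S) (I : Q → S) (q : Q) : List α → S :=
  fun w => ⨆ p : Q, I p * deltaStar δ p w q

/-- Future of a state of a weighted automaton. -/
def fut {Q : Type*} (δ : Q → α → Q → S) (F : Q → S) (q : Q) : List α → S :=
  fun w => ⨆ p : Q, deltaStar δ q w p * F p

/-- A series is DWA-regular if it is recognized by a finite deterministic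
weighted automaton. -/
def DWARegular (A : List α → S) : Prop :=
  ∃ (Q : Type) (_ : Fintype Q) (δ : Q → α → Q) (q0 : Q) (F : Q → S),
    ∀ w : List α, A w = F (w.foldl δ q0)

/-- A series is regular if it is the behaviour of a finite weighted automaton. -/
def Regular (A : List α → S) : Prop :=
  ∃ (Q : Type) (_ : Fintype Q) (δ : Q → α → Q → S) (I F : Q → S),
    behavior δ I F = A

/-- `(X, Y)` is a factorization of `A`. -/
def IsFactorization (A X Y : List α → S) : Prop :=
  cauchy X Y ≤ A ∧
    ∀ X' Y' : List α → S, X ≤ X' → Y ≤ Y' → cauchy X' Y' ≤ A → X' = X ∧ Y' = Y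

/-- The set of factorizations of `A` (states of the universal weighted automaton). -/
def Fact (A : List α → S) := {p : (List α → S) × (List α → S) // IsFactorization A p.1 p.2}

/-- Initial weights of the universal weighted automaton. -/
def JA (A : List α → S) (p : Fact A) : S := p.1.1 []

/-- Final weights of the universal weighted automaton. -/
def GA (A : List α → S) (p : Fact A) : S := p.1.2 []

/-- Transition weights of the universal weighted automaton. -/
def etaA (A : List α → S) (p : Fact A) (σ : α) (q : Fact A) : S :=
  incl (cauchy (cauchy p.1.1 (wordSeries [σ])) q.1.2) A

/-- The relation `u ≡_A v`. -/
def eqA (A : List α → S) : Setoid (List α) where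
  r u v := ∀ w, A (u ++ w) = A (v ++ w)
  iseqv := ⟨fun _ _ => rfl, fun h w => (h w).symm, fun h1 h2 w => (h1 w).trans (h2 w)⟩

end

end FPS

namespace FPS

variable {S : Type*} [CompleteCSemiring S] {α : Type*}

lemma cs_mul_sup (a b c : S) : a * (b ⊔ c) = a * b ⊔ a * c := by
  have h := CompleteCSemiring.mul_sSup a {b, c}
  rwa [sSup_pair, iSup_pair] at h

lemma cs_mul_le_mul_left {b c : S} (h : b ≤ c) (a : S) : a * b ≤ a * c := by
  have h1 := cs_mul_sup a b c
  rw [sup_eq_right.mpr h] at h1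
  exact h1 ▸ le_sup_left

lemma cs_mul_le_mul_right {b c : S} (h : b ≤ c) (a : S) : b * a ≤ c * a := by
  rw [mul_comm b, mul_comm c]
  exact cs_mul_le_mul_left h a

lemma le_resid_iff {a b c : S} : c ≤ resid a b ↔ a * c ≤ b := by
  refine ⟨fun h => (cs_mul_le_mul_left h a).trans ?_, fun h => le_sSup h⟩
  rw [resid, CompleteCSemiring.mul_sSup]
  exact iSup₂_le fun _ hx => hx

lemma le_incl_iff {f g : List α → S} {c : S} : c ≤ incl f g ↔ ∀ u, f u * c ≤ g u := by
  simp only [incl, le_iInf_iff, le_resid_iff]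

lemma cauchy_le_iff {A X Y : List α → S} :
    cauchy X Y ≤ A ↔ ∀ u v, X u * Y v ≤ A (u ++ v) := by
  constructor
  · intro h u v
    refine le_trans ?_ (h (u ++ v))
    exact le_iSup_of_le u (le_iSup_of_le v (le_iSup_of_le rfl le_rfl))
  · intro h w
    refine iSup_le fun u => iSup_le fun v => iSup_le ?_
    rintro rfl
    exact h u v

/-- The second factor of a factorization is the greatest series compatible with the first:
enlarging `Y` to `Y ⊔ Z` keeps the product below `A`. -/
lemma IsFactorization.le_right {A X Y Z : List α → S} (h : IsFactorization A X Y)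
    (hZ : ∀ u v, X u * Z v ≤ A (u ++ v)) : Z ≤ Y := by
  have hY := (h.2 X (Y ⊔ Z) le_rfl le_sup_left <| cauchy_le_iff.2 fun u v => by
    rw [Pi.sup_apply, cs_mul_sup]
    exact sup_le (cauchy_le_iff.1 h.1 u v) (hZ u v)).2
  exact sup_eq_left.mp hY

lemma IsFactorization.le_left {A X Y Z : List α → S} (h : IsFactorization A X Y)
    (hZ : ∀ u v, Z u * Y v ≤ A (u ++ v)) : Z ≤ X := by
  have hX := (h.2 (X ⊔ Z) Y le_sup_left le_rfl <| cauchy_le_iff.2 fun u v => by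
    rw [Pi.sup_apply, mul_comm, cs_mul_sup, mul_comm, mul_comm (Y v)]
    exact sup_le (cauchy_le_iff.1 h.1 u v) (hZ u v)).1
  exact sup_eq_left.mp hX

end FPS

open FPS in
/-- for factorizations `(X, Y)` and `(X', Y')` of `A`, the
inclusion degrees satisfy `X →ᵢ X' = Y' →ᵢ Y`. -/
theorem incl_degree_of_factorizations {S : Type*} [CompleteCSemiring S] {α : Type*}
    (A X Y X' Y' : List α → S)
    (h : IsFactorization A X Y) (h' : IsFactorization A X' Y') :
    incl X X' = incl Y' Y := by
  refine eq_of_forall_le_iff fun c => ?_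
  rw [le_incl_iff, le_incl_iff]
  constructor
  · intro hc
    refine h.le_right (Z := fun v => Y' v * c) fun u v => ?_
    calc X u * (Y' v * c) = X u * c * Y' v := by rw [mul_comm (Y' v), mul_assoc]
      _ ≤ X' u * Y' v := cs_mul_le_mul_right (hc u) _
      _ ≤ A (u ++ v) := cauchy_le_iff.1 h'.1 u v
  · intro hc
    refine h'.le_left (Z := fun u => X u * c) fun u v => ?_
    calc X u * c * Y' v = X u * (Y' v * c) := by rw [mul_comm (Y' v), mul_assoc]
      _ ≤ X u * Y v := cs_mul_le_mul_left (hc v) _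
      _ ≤ A (u ++ v) := cauchy_le_iff.1 h.1 u v
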